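/- arXiv:1111.7106 — 4 statements merged into one kernel-verified Lean document; each statement's English description precedes it below -/
import Mathlib

section
/- Let X¹ and X² be càdlàg functions from [0,∞) to ℝⁿ such that X² − X¹ is coordinatewise nonnegative and nondecreasing. Let (W¹, L¹) and (W², L²) be solution pairs of the Skorohod problem for X¹ and for X², respectively. Then W²(t) ≥ W¹(t) coordinatewise for all t ≥ 0. -/
/-!
The proof is an order-theoretic iteration, with no integration by parts.

Extend every function by `0` to the negative half-line and put `Z = W₂ - W₁`, `M = L₂ - L₁`,
`D = X₂ - X₁`, so that `Z i = D i + M i - ∑ j, P j i * M j`, with `D i` nondecreasing.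
Suppose nondecreasing functions `V j`, vanishing at negative times, dominate the increments of
the `M j`. Then `B i = ∑ j, P j i * V j` satisfies `ΔZ i ≥ ΔM i - ΔB i`. The flatness conditions
say that `L₂ i` does not grow while `Z i > 0` (there `W₂ i > 0`) and that `L₁ i` does not grow
while `Z i < 0` (there `W₁ i > 0`). Looking at the last time before `t` at which `Z i` had the
other sign gives, on every interval `[s, t]`,

* `Δ(Z i)⁻ ≤ ΔB i` (`negPart_increment_le`), and
* `ΔM i + Δ(Z i)⁻ ≤ ΔB i` (`increment_add_negPart_le`).

Hence `B i - (Z i)⁻` is again nondecreasing, vanishes at negative times and dominates the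
increments of `M i`, and it is at most `(Pᵀ V) i`. Starting from `V = L₂` and iterating
(`exists_dominating`), one gets `(Z i)⁻ (t) ≤ ((Pᵀ)ᵏ⁺¹ L₂ (t)) i` for every `k`, and the right side
tends to `0`. Left limits and jumps enter only through the behaviour of the monotone functions
`L₁`, `L₂` at the last sign change.
-/

open MeasureTheory Filter Topology

open Classical in
noncomputable def lsMeasure (f : ℝ → ℝ) : Measure ℝ :=
  if h : Monotone f ∧ ∀ x, ContinuousWithinAt f (Set.Ici x) x then
    StieltjesFunction.measure ⟨f, h.1, h.2⟩
  else 0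

noncomputable def extZero (f : ℝ → ℝ) : ℝ → ℝ := fun t => if t < 0 then 0 else f t

def Cadlag {n : ℕ} (X : ℝ → Fin n → ℝ) : Prop :=
  (∀ t : ℝ, 0 ≤ t → ContinuousWithinAt X (Set.Ici t) t) ∧
  (∀ t : ℝ, 0 < t → ∃ l : Fin n → ℝ, Filter.Tendsto X (nhdsWithin t (Set.Iio t)) (nhds l))

structure IsSolutionPair {n : ℕ} (R : Matrix (Fin n) (Fin n) ℝ)
    (X W L : ℝ → Fin n → ℝ) : Prop where
  eqn : ∀ t : ℝ, 0 ≤ t → W t = X t + R.mulVec (L t)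
  nonnegL : ∀ (i : Fin n) (t : ℝ), 0 ≤ t → 0 ≤ L t i
  monoL : ∀ i : Fin n, MonotoneOn (fun t => L t i) (Set.Ici (0 : ℝ))
  rcL : ∀ (i : Fin n) (t : ℝ), 0 ≤ t → ContinuousWithinAt (fun s => L s i) (Set.Ici t) t
  nonnegW : ∀ (i : Fin n) (t : ℝ), 0 ≤ t → 0 ≤ W t i
  flat : ∀ i : Fin n, lsMeasure (extZero fun t => L t i) {t : ℝ | 0 ≤ t ∧ 0 < W t i} = 0

lemma extZero_of_neg {f : ℝ → ℝ} {t : ℝ} (ht : t < 0) : extZero f t = 0 := if_pos ht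

lemma extZero_of_nonneg {f : ℝ → ℝ} {t : ℝ} (ht : 0 ≤ t) : extZero f t = f t :=
  if_neg (not_lt.mpr ht)

lemma extZero_monotone {f : ℝ → ℝ} (h0 : ∀ t, 0 ≤ t → 0 ≤ f t)
    (hm : MonotoneOn f (Set.Ici 0)) : Monotone (extZero f) := by
  intro s t hst
  rcases lt_or_ge s 0 with hs | hs
  · rw [extZero_of_neg hs]
    rcases lt_or_ge t 0 with ht | ht
    · rw [extZero_of_neg ht]
    · rw [extZero_of_nonneg ht]; exact h0 t ht
  · rw [extZero_of_nonneg hs, extZero_of_nonneg (hs.trans hst)]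
    exact hm hs (hs.trans hst) hst

lemma extZero_rightCts {f : ℝ → ℝ}
    (hc : ∀ t, 0 ≤ t → ContinuousWithinAt f (Set.Ici t) t) (x : ℝ) :
    ContinuousWithinAt (extZero f) (Set.Ici x) x := by
  rcases lt_or_ge x 0 with hx | hx
  · have : extZero f =ᶠ[𝓝 x] fun _ => 0 := by
      filter_upwards [Iio_mem_nhds hx] with y hy using extZero_of_neg hy
    exact (continuousAt_const.congr this.symm).continuousWithinAt
  · exact (hc x hx).congr (fun y hy => extZero_of_nonneg (hx.trans hy)) (extZero_of_nonneg hx)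

/-- `f` does not grow on the set `S`: it gains nothing over a half-open interval contained in `S`,
and over a closed interval `[u, t]` contained in `S` it does not exceed its left limit at `u`
(expressed through upper bounds of `f` on `(-∞, u)`). -/
def FlatOn (f : ℝ → ℝ) (S : Set ℝ) : Prop :=
  (∀ u t, Set.Ioc u t ⊆ S → f t ≤ f u) ∧
  (∀ u t c, u ≤ t → Set.Icc u t ⊆ S → (∀ r < u, f r ≤ c) → f t ≤ c)

lemma FlatOn.mono {f : ℝ → ℝ} {S T : Set ℝ} (h : FlatOn f T) (hST : S ⊆ T) : FlatOn f S :=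
  ⟨fun u t hs => h.1 u t (hs.trans hST), fun u t c hut hs => h.2 u t c hut (hs.trans hST)⟩

lemma flatOn_of_lsMeasure {f : ℝ → ℝ} (hm : Monotone f)
    (hc : ∀ x, ContinuousWithinAt f (Set.Ici x) x) {S : Set ℝ} (h : lsMeasure f S = 0) :
    FlatOn f S := by
  rw [lsMeasure, dif_pos ⟨hm, hc⟩] at h
  constructor
  · intro u t hs
    have h' := measure_mono_null hs h
    rw [StieltjesFunction.measure_Ioc, ENNReal.ofReal_eq_zero] at h'
    exact sub_nonpos.mp h'
  · intro u t c hut hs hr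
    have h' := measure_mono_null hs h
    rw [StieltjesFunction.measure_Icc, ENNReal.ofReal_eq_zero] at h'
    have h1 : f t ≤ Function.leftLim f u := sub_nonpos.mp h'
    refine h1.trans (le_of_tendsto (hm.tendsto_leftLim u) ?_)
    filter_upwards [self_mem_nhdsWithin] with r hr' using hr r hr'

/-- Last exit: if `p` holds at `s` but not at `t ≥ s`, then either there is a last time at which
`p` holds, or there is a time `u` from which on `p` fails and which is a limit from the left of
times in `[s, u)` where `p` holds. -/
lemma last_exit (p : ℝ → Prop) {s t : ℝ} (hst : s ≤ t) (hs : p s) :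
    (∃ u, s ≤ u ∧ u ≤ t ∧ p u ∧ ∀ r ∈ Set.Ioc u t, ¬ p r) ∨
    (∃ u, s ≤ u ∧ u ≤ t ∧ (∀ r ∈ Set.Icc u t, ¬ p r) ∧
      ∀ r < u, ∃ q, r < q ∧ q < u ∧ s ≤ q ∧ p q) := by
  set A : Set ℝ := {r | s ≤ r ∧ r ≤ t ∧ p r} with hA
  have hne : s ∈ A := ⟨le_rfl, hst, hs⟩
  have hbd : BddAbove A := ⟨t, fun r hr => hr.2.1⟩
  have hsu : s ≤ sSup A := le_csSup hbd hne
  have hut : sSup A ≤ t := csSup_le ⟨s, hne⟩ fun r hr => hr.2.1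
  have hafter : ∀ r ∈ Set.Ioc (sSup A) t, ¬ p r := fun r hr hp =>
    not_lt.mpr (le_csSup hbd ⟨hsu.trans hr.1.le, hr.2, hp⟩) hr.1
  by_cases hp : p (sSup A)
  · exact Or.inl ⟨_, hsu, hut, hp, hafter⟩
  · refine Or.inr ⟨_, hsu, hut, fun r hr => ?_, fun r hr => ?_⟩
    · rcases hr.1.eq_or_lt with h | h
      · rwa [← h]
      · exact hafter r ⟨h, hr.2⟩
    · obtain ⟨q, hq, hrq⟩ := exists_lt_of_lt_csSup ⟨s, hne⟩ hr
      refine ⟨q, hrq, lt_of_le_of_ne (le_csSup hbd hq) ?_, hq.1, hq.2.2⟩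
      rintro rfl
      exact hp hq.2.2

section OneDim

variable {Z B l₁ l₂ : ℝ → ℝ}

/-- If `Z` moves by at least `Δ(l₂ - l₁) - ΔB` and `l₁` is flat while `Z < 0`, the negative part
of `Z` grows by at most `ΔB`. -/
lemma negPart_increment_le (hB : Monotone B) (h₁ : Monotone l₁) (h₂ : Monotone l₂)
    (hZ : ∀ s t, s ≤ t → (l₂ t - l₁ t) - (l₂ s - l₁ s) - (B t - B s) ≤ Z t - Z s)
    (hf : FlatOn l₁ {r | Z r < 0}) {s t : ℝ} (hst : s ≤ t) :
    max (-Z t) 0 ≤ max (-Z s) 0 + (B t - B s) := by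
  have hBst := hB hst
  have hs0 := le_max_right (-Z s) 0
  have hs1 := le_max_left (-Z s) 0
  refine max_le ?_ (by linarith)
  -- `s` itself is admitted as exit time whatever the sign of `Z s`
  rcases last_exit (fun r => r = s ∨ 0 ≤ Z r) hst (Or.inl rfl) with
    ⟨u, hsu, hut, hu, hr⟩ | ⟨u, hsu, hut, hr, hq⟩
  · have hfl : l₁ t ≤ l₁ u :=
      hf.1 u t fun r h => lt_of_not_ge fun h0 => hr r h (Or.inr h0)
    have e := hZ u t hut
    have e2 := h₂ hut
    have e3 := hB hsu
    rcases hu with rfl | hu <;> linarith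
  · have key : l₁ t ≤ l₁ t + (Z t + max (-Z s) 0 + (B t - B s)) := by
      refine hf.2 u t _ hut (fun r h => lt_of_not_ge fun h0 => hr r h (Or.inr h0)) fun r hru => ?_
      obtain ⟨q, hrq, hqu, hsq, hpq⟩ := hq r hru
      have e := hZ q t (hqu.le.trans hut)
      have e2 := h₂ (hqu.le.trans hut)
      have e3 := hB hsq
      have e4 := h₁ hrq.le
      rcases hpq with rfl | hpq <;> linarith
    linarith

/-- If `Z` moves by at least `Δ(l₂ - l₁) - ΔB` and `l₂` is flat while `Z > 0`, then the growth of
`l₂ - l₁` together with that of the negative part of `Z` is at most `ΔB`. -/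
lemma increment_add_negPart_le (hB : Monotone B) (h₁ : Monotone l₁) (h₂ : Monotone l₂)
    (hZ : ∀ s t, s ≤ t → (l₂ t - l₁ t) - (l₂ s - l₁ s) - (B t - B s) ≤ Z t - Z s)
    (hf : FlatOn l₂ {r | 0 < Z r}) {s t : ℝ} (hst : s ≤ t) :
    (l₂ t - l₁ t) - (l₂ s - l₁ s) + max (-Z t) 0 ≤ max (-Z s) 0 + (B t - B s) := by
  have hs0 := le_max_right (-Z s) 0
  have hs1 := le_max_left (-Z s) 0
  rcases le_or_gt (Z t) 0 with ht | ht
  · rw [max_eq_left (by linarith : 0 ≤ -Z t)]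
    linarith [hZ s t hst]
  rw [max_eq_right (by linarith : -Z t ≤ 0)]
  have hexit : ∀ q, s ≤ q → (q = s ∨ Z q ≤ 0) →
      (l₂ q - l₁ q) - (l₂ s - l₁ s) ≤ max (-Z s) 0 + (B q - B s) := by
    intro q hsq hpq
    have e := hZ s q hsq
    rcases hpq with rfl | hpq <;> linarith
  -- `s` itself is again admitted as exit time
  rcases last_exit (fun r => r = s ∨ Z r ≤ 0) hst (Or.inl rfl) with
    ⟨u, hsu, hut, hu, hr⟩ | ⟨u, hsu, hut, hr, hq⟩
  · have hfl : l₂ t ≤ l₂ u :=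
      hf.1 u t fun r h => lt_of_not_ge fun h0 => hr r h (Or.inr h0)
    linarith [hexit u hsu hu, h₁ hut, hB hut]
  · have key : l₂ t ≤ l₁ t + (l₂ s - l₁ s) + max (-Z s) 0 + (B t - B s) := by
      refine hf.2 u t _ hut (fun r h => lt_of_not_ge fun h0 => hr r h (Or.inr h0)) fun r hru => ?_
      obtain ⟨q, hrq, hqu, hsq, hpq⟩ := hq r hru
      have hqt := hqu.le.trans hut
      linarith [hexit q hsq hpq, h₁ hqt, hB hqt, h₂ hrq.le]
    linarith

end OneDim

section Iteration

variable {n : ℕ} {P : Matrix (Fin n) (Fin n) ℝ} {D Z l₁ l₂ : Fin n → ℝ → ℝ}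

/-- The hypothesis of the one-dimensional estimates, with `B = (Pᵀ V) i`, holds for each coordinate
`i` once `V` dominates the increments of `M`. -/
lemma increment_bound {M V : Fin n → ℝ → ℝ} (hP : ∀ i j, 0 ≤ P i j) (hD : ∀ i, Monotone (D i))
    (hZ : ∀ i t, Z i t = D i t + M i t - ∑ j, P j i * M j t)
    (hV : ∀ i s t, s ≤ t → M i t - M i s ≤ V i t - V i s) (i : Fin n) (s t : ℝ) (hst : s ≤ t) :
    M i t - M i s - (∑ j, P j i * V j t - ∑ j, P j i * V j s) ≤ Z i t - Z i s := by
  have h : ∑ j, P j i * (M j t - M j s) ≤ ∑ j, P j i * (V j t - V j s) :=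
    Finset.sum_le_sum fun j _ => mul_le_mul_of_nonneg_left (hV j s t hst) (hP j i)
  simp only [mul_sub, Finset.sum_sub_distrib] at h
  rw [hZ, hZ]
  linarith [hD i hst]

lemma sum_mul_monotone {V : Fin n → ℝ → ℝ} (hP : ∀ i j, 0 ≤ P i j) (hV : ∀ i, Monotone (V i))
    (i : Fin n) : Monotone fun t => ∑ j, P j i * V j t := fun _ _ hst =>
  Finset.sum_le_sum fun j _ => mul_le_mul_of_nonneg_left (hV j hst) (hP j i)

lemma sum_mul_le_pow_succ {V : Fin n → ℝ → ℝ} (hP : ∀ i j, 0 ≤ P i j) {k : ℕ}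
    (hV : ∀ i t, V i t ≤ ∑ j, (P ^ k) j i * l₂ j t) (i : Fin n) (t : ℝ) :
    ∑ j, P j i * V j t ≤ ∑ m, (P ^ (k + 1)) m i * l₂ m t := by
  have h1 : ∑ j, P j i * V j t ≤ ∑ j, P j i * ∑ m, (P ^ k) m j * l₂ m t :=
    Finset.sum_le_sum fun j _ => mul_le_mul_of_nonneg_left (hV j t) (hP j i)
  refine h1.trans_eq ?_
  simp only [pow_succ, Matrix.mul_apply, Finset.mul_sum, Finset.sum_mul]
  rw [Finset.sum_comm]
  exact Finset.sum_congr rfl fun m _ => Finset.sum_congr rfl fun j _ => by ring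

/-- For each `k` there are nondecreasing functions `V i`, vanishing at negative times, which
dominate the increments of `l₂ i - l₁ i` and are bounded by `(Pᵀ)ᵏ l₂`. The step replaces `V` by
`Pᵀ V - Z⁻`. -/
lemma exists_dominating (hP : ∀ i j, 0 ≤ P i j) (hD : ∀ i, Monotone (D i))
    (h₁ : ∀ i, Monotone (l₁ i)) (h₂ : ∀ i, Monotone (l₂ i))
    (hl₂ : ∀ i t, t < 0 → l₂ i t = 0) (hZ0 : ∀ i t, t < 0 → Z i t = 0)
    (hZ : ∀ i t, Z i t = D i t + (l₂ i t - l₁ i t) - ∑ j, P j i * (l₂ j t - l₁ j t))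
    (hf₁ : ∀ i, FlatOn (l₁ i) {r | Z i r < 0}) (hf₂ : ∀ i, FlatOn (l₂ i) {r | 0 < Z i r})
    (k : ℕ) :
    ∃ V : Fin n → ℝ → ℝ, (∀ i, Monotone (V i)) ∧ (∀ i t, t < 0 → V i t = 0) ∧
      (∀ i s t, s ≤ t → (l₂ i t - l₁ i t) - (l₂ i s - l₁ i s) ≤ V i t - V i s) ∧
      ∀ i t, V i t ≤ ∑ j, (P ^ k) j i * l₂ j t := by
  induction k with
  | zero =>
    refine ⟨l₂, h₂, hl₂, fun i s t hst => by linarith [h₁ i hst], fun i t => ?_⟩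
    simp [Matrix.one_apply]
  | succ k ih =>
    obtain ⟨V, hVm, hV0, hVd, hVb⟩ := ih
    have hinc := increment_bound hP hD (M := fun i t => l₂ i t - l₁ i t) hZ hVd
    have hB := sum_mul_monotone hP hVm
    refine ⟨fun i t => ∑ j, P j i * V j t - max (-Z i t) 0, fun i s t hst => ?_,
      fun i t ht => ?_, fun i s t hst => ?_, fun i t => ?_⟩
    · have := negPart_increment_le (hB i) (h₁ i) (h₂ i) (hinc i) (hf₁ i) hst
      dsimp only at this ⊢
      linarith
    · simp [hZ0 i t ht, hV0 _ t ht]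
    · have := increment_add_negPart_le (hB i) (h₁ i) (h₂ i) (hinc i) (hf₂ i) hst
      dsimp only at this ⊢
      linarith
    · have := sum_mul_le_pow_succ hP hVb i t
      dsimp only
      linarith [le_max_right (-Z i t) 0]

/-- The comparison on the whole line, for functions already extended by zero. -/
lemma nonneg_of_flat (hP : ∀ i j, 0 ≤ P i j) (hPpow : Tendsto (fun k : ℕ => P ^ k) atTop (𝓝 0))
    (hD : ∀ i, Monotone (D i))
    (h₁ : ∀ i, Monotone (l₁ i)) (h₂ : ∀ i, Monotone (l₂ i))
    (hl₂ : ∀ i t, t < 0 → l₂ i t = 0) (hZ0 : ∀ i t, t < 0 → Z i t = 0)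
    (hZ : ∀ i t, Z i t = D i t + (l₂ i t - l₁ i t) - ∑ j, P j i * (l₂ j t - l₁ j t))
    (hf₁ : ∀ i, FlatOn (l₁ i) {r | Z i r < 0}) (hf₂ : ∀ i, FlatOn (l₂ i) {r | 0 < Z i r})
    (i : Fin n) (t : ℝ) : 0 ≤ Z i t := by
  rcases lt_or_ge t 0 with ht | ht
  · exact (hZ0 i t ht).ge
  have hlim : Tendsto (fun k : ℕ => ∑ j, (P ^ k) j i * l₂ j t) atTop (𝓝 0) := by
    have : Tendsto (fun k : ℕ => ∑ j, (P ^ k) j i * l₂ j t) atTop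
        (𝓝 (∑ j, (0 : Matrix (Fin n) (Fin n) ℝ) j i * l₂ j t)) :=
      tendsto_finsetSum _ fun j _ =>
        ((tendsto_pi_nhds.mp (tendsto_pi_nhds.mp hPpow j) i)).mul_const _
    simpa using this
  have hle : ∀ k : ℕ, -Z i t ≤ ∑ j, (P ^ (k + 1)) j i * l₂ j t := by
    intro k
    obtain ⟨V, hVm, hV0, hVd, hVb⟩ :=
      exists_dominating hP hD h₁ h₂ hl₂ hZ0 hZ hf₁ hf₂ k
    have hinc := increment_bound hP hD (M := fun i t => l₂ i t - l₁ i t) hZ hVd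
    -- everything vanishes at the negative time `-1`, so the increment bound is a bound at `t`
    have h := negPart_increment_le (sum_mul_monotone hP hVm i) (h₁ i) (h₂ i) (hinc i) (hf₁ i)
      (by linarith : (-1 : ℝ) ≤ t)
    simp only [hZ0 i (-1) (by norm_num), hV0 _ (-1) (by norm_num), mul_zero,
      Finset.sum_const_zero, neg_zero, max_self, zero_add, sub_zero] at h
    exact (le_max_left _ _).trans (h.trans (sum_mul_le_pow_succ hP hVb i t))
  linarith [ge_of_tendsto' (hlim.comp (tendsto_add_atTop_nat 1)) hle]

end Iteration

lemma IsSolutionPair.apply_eq {n : ℕ} {P : Matrix (Fin n) (Fin n) ℝ} {X W L : ℝ → Fin n → ℝ}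
    (h : IsSolutionPair (1 - P.transpose) X W L) (i : Fin n) {t : ℝ} (ht : 0 ≤ t) :
    W t i = X t i + L t i - ∑ j, P j i * L t j := by
  rw [h.eqn t ht, Pi.add_apply, Matrix.sub_mulVec, Matrix.one_mulVec, Pi.sub_apply]
  simp only [Matrix.mulVec, dotProduct, Matrix.transpose_apply]
  ring

lemma IsSolutionPair.flatOn {n : ℕ} {R : Matrix (Fin n) (Fin n) ℝ} {X W L : ℝ → Fin n → ℝ}
    (h : IsSolutionPair R X W L) (i : Fin n) :
    FlatOn (extZero fun t => L t i) {t : ℝ | 0 ≤ t ∧ 0 < W t i} :=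
  flatOn_of_lsMeasure (extZero_monotone (h.nonnegL i) (h.monoL i)) (extZero_rightCts (h.rcL i))
    (h.flat i)

/-- Theorem 1.1(i): comparison of reflected functions for ordered inputs. -/
theorem skorohod_monotone_comparison
    {n : ℕ} (hn : 0 < n) (P : Matrix (Fin n) (Fin n) ℝ)
    (hPnonneg : ∀ i j, 0 ≤ P i j)
    (hPpow : Filter.Tendsto (fun k : ℕ => P ^ k) Filter.atTop (nhds 0))
    (X₁ X₂ W₁ L₁ W₂ L₂ : ℝ → Fin n → ℝ)
    (hX₁ : Cadlag X₁) (hX₂ : Cadlag X₂)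
    (hdiff_nonneg : ∀ t : ℝ, 0 ≤ t → 0 ≤ X₂ t - X₁ t)
    (hdiff_mono : ∀ i : Fin n, MonotoneOn (fun t => X₂ t i - X₁ t i) (Set.Ici (0 : ℝ)))
    (h₁ : IsSolutionPair (1 - P.transpose) X₁ W₁ L₁)
    (h₂ : IsSolutionPair (1 - P.transpose) X₂ W₂ L₂) :
    ∀ t : ℝ, 0 ≤ t → W₁ t ≤ W₂ t := by
  intro t ht i
  have key := nonneg_of_flat (P := P)
    (D := fun i => extZero fun t => X₂ t i - X₁ t i)
    (Z := fun i => extZero fun t => W₂ t i - W₁ t i)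
    (l₁ := fun i => extZero fun t => L₁ t i) (l₂ := fun i => extZero fun t => L₂ t i)
    hPnonneg hPpow
    (fun i => extZero_monotone (fun t ht => hdiff_nonneg t ht i) (hdiff_mono i))
    (fun i => extZero_monotone (h₁.nonnegL i) (h₁.monoL i))
    (fun i => extZero_monotone (h₂.nonnegL i) (h₂.monoL i))
    (fun i t ht => extZero_of_neg ht) (fun i t ht => extZero_of_neg ht)
    ?_ ?_ ?_ i t
  · rw [extZero_of_nonneg ht] at key
    exact sub_nonneg.mp key
  · intro i t
    rcases lt_or_ge t 0 with ht | ht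
    · simp [extZero_of_neg ht]
    · simp only [extZero_of_nonneg ht, h₁.apply_eq i ht, h₂.apply_eq i ht, mul_sub,
        Finset.sum_sub_distrib]
      ring
  · refine fun i => (h₁.flatOn i).mono fun r (hr : extZero _ r < 0) => ?_
    rcases lt_or_ge r 0 with h0 | h0
    · rw [extZero_of_neg h0] at hr
      exact absurd hr (lt_irrefl _)
    · rw [extZero_of_nonneg h0] at hr
      exact ⟨h0, by linarith [h₂.nonnegW i r h0]⟩
  · refine fun i => (h₂.flatOn i).mono fun r (hr : 0 < extZero _ r) => ?_
    rcases lt_or_ge r 0 with h0 | h0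
    · rw [extZero_of_neg h0] at hr
      exact absurd hr (lt_irrefl _)
    · rw [extZero_of_nonneg h0] at hr
      exact ⟨h0, by linarith [h₁.nonnegW i r h0]⟩
end

section
/- Let X be a càdlàg function from [0,∞) to ℝⁿ and let a ∈ [0,∞)ⁿ. Let (Wᵃ, Lᵃ) be a solution pair of the Skorohod problem for a + X and let (W⁰, L⁰) be a solution pair of the Skorohod problem for X. Then Lᵃ(t) ≤ L⁰(t) ≤ Lᵃ(t) + R⁻¹a coordinatewise for all t ≥ 0. -/
/-!
The proof rests on a minimality property of the regulator: if `(W, L)` solves the Skorohod problem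
for `X` and `Y` is any nonnegative nondecreasing function with `X + R Y ≥ 0`, then `L ≤ Y`
(`regulator_le`). Both inequalities are instances: `Y = L⁰` is admissible for `a + X`, and
`Y = Lᵃ + R⁻¹ a` is admissible for `X`, as `X + R (Lᵃ + R⁻¹ a) = Wᵃ` and `R⁻¹ a ≥ 0`.

For minimality write `Q = Pᵗ`. By the flatness condition, the value `L_i(s)` is attained up to an
arbitrarily small error at some `u ≤ s` with `W_i(u) = 0` (`exists_zero_near`). There
`L_i(u) - Y_i(u) ≤ (Q (L(u) - Y(u)))_i`, because `W_i(u) = 0 ≤ (X + R Y)_i(u)`. Hence a bound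
`L - Y ≤ v` on `[0, t]` with `v ≥ 0` improves to `L - Y ≤ Q v`. Starting with `v = L(t)`, one gets
`L - Y ≤ Q ^ k L(t)` for all `k`, and `Q ^ k → 0`.
-/

open MeasureTheory Filter Topology

/-- Flatness in usable form: a positive value `L t i` is nearly attained, within any
`0 < ε < L t i`, at some time `u ≤ t` at which `W` vanishes in coordinate `i`. -/
lemma exists_zero_near {n : ℕ} {R : Matrix (Fin n) (Fin n) ℝ} {X W L : ℝ → Fin n → ℝ}
    (h : IsSolutionPair R X W L) (i : Fin n) {t ε : ℝ} (ht : 0 ≤ t) (hε : 0 < ε)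
    (hεL : ε < L t i) :
    ∃ u, 0 ≤ u ∧ u ≤ t ∧ W u i = 0 ∧ L t i - ε ≤ L u i := by
  set f : ℝ → ℝ := extZero fun s => L s i with hf
  have f_neg : ∀ {s}, s < 0 → f s = 0 := fun hs => by simp [hf, extZero, hs]
  have f_pos : ∀ {s}, 0 ≤ s → f s = L s i := fun hs => by simp [hf, extZero, not_lt.mpr hs]
  have hmono : Monotone f := by
    intro x y hxy
    rcases lt_or_ge x 0 with hx | hx
    · rw [f_neg hx]
      rcases lt_or_ge y 0 with hy | hy
      · rw [f_neg hy]
      · rw [f_pos hy]; exact h.nonnegL i y hy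
    · rw [f_pos hx, f_pos (hx.trans hxy)]
      exact h.monoL i hx (hx.trans hxy) hxy
  have hrc : ∀ x, ContinuousWithinAt f (Set.Ici x) x := by
    intro x
    rcases lt_or_ge x 0 with hx | hx
    · have : f =ᶠ[𝓝 x] fun _ => (0 : ℝ) := by
        filter_upwards [Iio_mem_nhds hx] with s hs using f_neg hs
      exact (continuousAt_const.congr this.symm).continuousWithinAt
    · exact (h.rcL i x hx).congr (fun s hs => f_pos (hx.trans hs)) (f_pos hx)
  set F : StieltjesFunction ℝ := ⟨f, hmono, hrc⟩ with hF
  have hflat : F.measure {s : ℝ | 0 ≤ s ∧ 0 < W s i} = 0 := by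
    have := h.flat i
    rwa [lsMeasure, dif_pos ⟨hmono, hrc⟩] at this
  -- `τ` is the first time at which `L_i` reaches the level `L t i - ε`.
  set S : Set ℝ := {s | L t i - ε ≤ f s} with hS
  have hSnonneg : ∀ s ∈ S, 0 ≤ s := by
    intro s hs
    by_contra! hneg
    have : L t i - ε ≤ f s := hs
    rw [f_neg hneg] at this
    linarith
  have hSbdd : BddBelow S := ⟨0, hSnonneg⟩
  have htS : t ∈ S := by
    change L t i - ε ≤ f t
    rw [f_pos ht]; linarith
  set τ := sInf S with hτ
  have hτ0 : 0 ≤ τ := le_csInf ⟨t, htS⟩ hSnonneg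
  have hτt : τ ≤ t := csInf_le hSbdd htS
  have hτS : L t i - ε ≤ f τ := by
    have hgt : ∀ s, τ < s → L t i - ε ≤ f s := by
      intro s hs
      obtain ⟨r, hr, hrs⟩ := exists_lt_of_csInf_lt ⟨t, htS⟩ hs
      exact le_trans hr (hmono hrs.le)
    have hc : Tendsto f (𝓝[>] τ) (𝓝 (f τ)) := (hrc τ).mono Set.Ioi_subset_Ici_self
    exact ge_of_tendsto hc (by filter_upwards [self_mem_nhdsWithin] with s hs using hgt s hs)
  have hleft : Function.leftLim f τ ≤ L t i - ε := by
    refine le_of_tendsto (hmono.tendsto_leftLim τ) ?_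
    filter_upwards [self_mem_nhdsWithin] with s hs
    by_contra! hlt
    exact absurd (csInf_le hSbdd (show s ∈ S from hlt.le)) (not_le.mpr hs)
  by_contra! hno
  have hsub : Set.Icc τ t ⊆ {s : ℝ | 0 ≤ s ∧ 0 < W s i} := by
    intro s hs
    have hs0 : 0 ≤ s := hτ0.trans hs.1
    refine ⟨hs0, lt_of_le_of_ne (h.nonnegW i s hs0) fun hW => ?_⟩
    have h1 := hno s hs0 hs.2 hW.symm
    have h2 := hmono hs.1
    rw [f_pos hs0] at h2
    linarith
  have hz := measure_mono_null hsub hflat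
  rw [StieltjesFunction.measure_Icc, ENNReal.ofReal_eq_zero] at hz
  have h3 : f t - Function.leftLim f τ ≤ 0 := hz
  rw [f_pos ht] at h3
  linarith

lemma mulVec_mono {n : ℕ} {Q : Matrix (Fin n) (Fin n) ℝ} (hQ : ∀ i j, 0 ≤ Q i j)
    {v w : Fin n → ℝ} (hvw : v ≤ w) : Q.mulVec v ≤ Q.mulVec w := by
  intro i
  simp only [Matrix.mulVec, dotProduct]
  exact Finset.sum_le_sum fun j _ => mul_le_mul_of_nonneg_left (hvw j) (hQ i j)

lemma tendsto_pow_mulVec {n : ℕ} {Q : Matrix (Fin n) (Fin n) ℝ}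
    (hQ : Tendsto (fun k : ℕ => Q ^ k) atTop (𝓝 0)) (v : Fin n → ℝ) :
    Tendsto (fun k : ℕ => (Q ^ k).mulVec v) atTop (𝓝 0) := by
  have hc : Continuous fun M : Matrix (Fin n) (Fin n) ℝ => M.mulVec v :=
    continuous_id.matrix_mulVec continuous_const
  have := (hc.tendsto 0).comp hQ
  rwa [Matrix.zero_mulVec] at this

/-- If `b` dominates `Q b`, then `b` dominates `Q ^ k b → 0`. -/
lemma nonneg_of_mulVec_le {n : ℕ} {Q : Matrix (Fin n) (Fin n) ℝ} (hQ : ∀ i j, 0 ≤ Q i j)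
    (hQpow : Tendsto (fun k : ℕ => Q ^ k) atTop (𝓝 0)) {b : Fin n → ℝ}
    (hb : Q.mulVec b ≤ b) : 0 ≤ b := by
  refine le_of_tendsto (tendsto_pow_mulVec hQpow b) (Eventually.of_forall fun k => ?_)
  induction k with
  | zero => simp
  | succ k ih =>
    rw [pow_succ', ← Matrix.mulVec_mulVec]
    exact (mulVec_mono hQ ih).trans hb

lemma isUnit_one_sub {n : ℕ} {Q : Matrix (Fin n) (Fin n) ℝ}
    (hQpow : Tendsto (fun k : ℕ => Q ^ k) atTop (𝓝 0)) : IsUnit (1 - Q) := by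
  rw [← Matrix.mulVec_injective_iff_isUnit]
  refine (injective_iff_map_eq_zero (Matrix.mulVecLin (1 - Q))).mpr fun v hv => ?_
  have hv' : Q.mulVec v = v := by
    rw [Matrix.mulVecLin_apply, Matrix.sub_mulVec, Matrix.one_mulVec, sub_eq_zero] at hv
    exact hv.symm
  have hk : ∀ k : ℕ, (Q ^ k).mulVec v = v := by
    intro k
    induction k with
    | zero => simp
    | succ k ih => rw [pow_succ, ← Matrix.mulVec_mulVec, hv', ih]
  have := tendsto_pow_mulVec hQpow v
  simp only [hk] at this
  exact tendsto_nhds_unique tendsto_const_nhds this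

/-- Minimality of the regulator among nonnegative nondecreasing `Y` with `X + (1 - Q) Y ≥ 0`. -/
lemma regulator_le {n : ℕ} {Q : Matrix (Fin n) (Fin n) ℝ} (hQ : ∀ i j, 0 ≤ Q i j)
    (hQpow : Tendsto (fun k : ℕ => Q ^ k) atTop (𝓝 0)) {X W L Y : ℝ → Fin n → ℝ}
    (h : IsSolutionPair (1 - Q) X W L) (hY : ∀ t, 0 ≤ t → 0 ≤ Y t)
    (hYmono : ∀ s t, 0 ≤ s → s ≤ t → Y s ≤ Y t)
    (hXY : ∀ t, 0 ≤ t → 0 ≤ X t + (1 - Q).mulVec (Y t)) (t : ℝ) (ht : 0 ≤ t) :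
    L t ≤ Y t := by
  have hLt : (0 : Fin n → ℝ) ≤ L t := fun i => h.nonnegL i t ht
  have hpos : ∀ k : ℕ, (0 : Fin n → ℝ) ≤ (Q ^ k).mulVec (L t) := by
    intro k
    induction k with
    | zero => simpa using hLt
    | succ k ih =>
      rw [pow_succ', ← Matrix.mulVec_mulVec]
      simpa using mulVec_mono hQ ih
  have key : ∀ (k : ℕ) (s : ℝ), 0 ≤ s → s ≤ t → L s - Y s ≤ (Q ^ k).mulVec (L t) := by
    intro k
    induction k with
    | zero =>
      intro s hs hst i
      have h1 : L s i ≤ L t i := h.monoL i hs ht hst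
      have h2 : 0 ≤ Y s i := hY s hs i
      simp only [pow_zero, Matrix.one_mulVec, Pi.sub_apply]
      linarith
    | succ k ih =>
      intro s hs hst i
      have hp : 0 ≤ (Q ^ (k + 1)).mulVec (L t) i := hpos (k + 1) i
      rw [Pi.sub_apply]
      rcases (h.nonnegL i s hs).eq_or_lt with h0 | h0
      · have h2 : 0 ≤ Y s i := hY s hs i
        linarith
      refine le_of_forall_pos_le_add fun δ hδ => ?_
      obtain ⟨u, hu, hus, hWu, hLu⟩ := exists_zero_near h i hs
        (lt_min hδ (half_pos h0)) ((min_le_right _ _).trans_lt (half_lt_self h0))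
      have hmin := min_le_left δ (L s i / 2)
      have h1 : Y u i ≤ Y s i := hYmono u s hu hus i
      have h2 := congrFun (h.eqn u hu) i
      have h3 := hXY u hu i
      have h4 := mulVec_mono hQ (ih u hu (hus.trans hst)) i
      rw [Matrix.mulVec_mulVec, ← pow_succ', Matrix.mulVec_sub] at h4
      simp only [Pi.add_apply, Pi.sub_apply, Pi.zero_apply, Matrix.sub_mulVec,
        Matrix.one_mulVec] at h2 h3 h4
      linarith
  have hle : L t - Y t ≤ 0 :=
    ge_of_tendsto (tendsto_pow_mulVec hQpow (L t))
      (Eventually.of_forall fun k => key k t ht le_rfl)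
  exact sub_nonpos.mp hle

/-- Lᵃ ≤ L⁰ ≤ Lᵃ + R⁻¹a coordinatewise for all t ≥ 0. -/
theorem skorohod_regulator_sandwich
    {n : ℕ} (hn : 0 < n) (P : Matrix (Fin n) (Fin n) ℝ)
    (hPnonneg : ∀ i j, 0 ≤ P i j)
    (hPpow : Filter.Tendsto (fun k : ℕ => P ^ k) Filter.atTop (nhds 0))
    (X Wa La W0 L0 : ℝ → Fin n → ℝ)
    (hX : Cadlag X) (a : Fin n → ℝ) (ha : 0 ≤ a)
    (hA : IsSolutionPair (1 - P.transpose) (fun t => a + X t) Wa La)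
    (h0 : IsSolutionPair (1 - P.transpose) X W0 L0) :
    ∀ t : ℝ, 0 ≤ t →
      La t ≤ L0 t ∧ L0 t ≤ La t + (1 - P.transpose)⁻¹.mulVec a := by
  have hQ : ∀ i j, 0 ≤ P.transpose i j := fun i j => hPnonneg j i
  have hQpow : Tendsto (fun k : ℕ => P.transpose ^ k) atTop (𝓝 0) := by
    have hc : Continuous fun M : Matrix (Fin n) (Fin n) ℝ => M.transpose :=
      continuous_id.matrix_transpose
    have := (hc.tendsto 0).comp hPpow
    simpa [Function.comp_def, Matrix.transpose_pow] using this
  set Q := P.transpose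
  set b := (1 - Q)⁻¹.mulVec a with hb
  have hRb : (1 - Q).mulVec b = a := by
    rw [hb, Matrix.mulVec_mulVec, Matrix.mul_nonsing_inv _
      ((Matrix.isUnit_iff_isUnit_det _).mp (isUnit_one_sub hQpow)), Matrix.one_mulVec]
  have hb0 : 0 ≤ b := by
    refine nonneg_of_mulVec_le hQ hQpow (sub_nonneg.mp ?_)
    rw [Matrix.sub_mulVec, Matrix.one_mulVec] at hRb
    rwa [hRb]
  intro t ht
  constructor
  · refine regulator_le hQ hQpow hA (fun s hs i => h0.nonnegL i s hs)
      (fun r s hr hrs i => h0.monoL i hr (hr.trans hrs) hrs) (fun s hs => ?_) t ht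
    rw [add_assoc, ← h0.eqn s hs]
    exact add_nonneg ha fun i => h0.nonnegW i s hs
  · refine regulator_le (Y := fun s => La s + b) hQ hQpow h0
      (fun s hs => add_nonneg (fun i => hA.nonnegL i s hs) hb0)
      (fun r s hr hrs => add_le_add_left
        (fun i => hA.monoL i hr (hr.trans hrs) hrs) b) (fun s hs => ?_) t ht
    have hW : X s + (1 - Q).mulVec (La s + b) = Wa s := by
      rw [Matrix.mulVec_add, hRb, hA.eqn s hs]
      abel
    rw [hW]
    exact fun i => hA.nonnegW i s hs
end

section
/- Let X be a càdlàg function from [0,∞) to ℝⁿ and fix i ∈ {1,…,n}. Suppose that for every a ∈ [0,∞)ⁿ one has lim_{t→∞} (Wᵃ_i(t) − W⁰_i(t)) = 0, where (Wᶜ, Lᶜ) denotes the unique solution pair of the Skorohod problem for c + X. Then for every a ∈ [0,∞)ⁿ, lim_{t→∞} Lᵃ_i(t) = ∞. -/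
/-!
The heart of the matter is a minimality property of Skorohod solutions (`reflection_le`): if
`(W, L)` solves the problem for `X`, and `M` is nonnegative and nondecreasing with `X + R M ≥ 0`,
then `L ≤ M`. Indeed, if `L - M ≤ D` on `[0, t]` for a constant vector `D ≥ 0`, then at every time
where `L_i` exceeds `M_i(t) + (Pᵗ D)_i` one has `W_i > 0`, so `dL_i` does not charge those times
and `L_i` can never exceed that level. Hence `L - M ≤ Pᵗ D` on `[0, t]`; iterating from `D = L(t)`
and using `Pᵏ → 0` gives `L ≤ M`. In particular, raising the starting point lowers `L`.

Now suppose `Lᵃ_i` is bounded by some `B`, and start from `c = a + (B + 1) e_i` instead. Since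
`Lᶜ ≤ Lᵃ`, the difference `Wᶜ_i - Wᵃ_i = B + 1 + (Lᶜ - Lᵃ)_i - (Pᵗ (Lᶜ - Lᵃ))_i` is always at
least `B + 1 - B = 1`, contradicting its convergence to `0`.
-/


open MeasureTheory Filter Topology

/-- If the Lebesgue–Stieltjes measure of `f` does not charge the times in `(-∞, t]` at which `f`
exceeds the level `B`, and `f` does not exceed `B` at some time, then `f t ≤ B`. -/
lemma stieltjes_le_of_null (f : StieltjesFunction ℝ) (t B u : ℝ) (hu : f u ≤ B)
    (h : f.measure {s | s ≤ t ∧ B < f s} = 0) : f t ≤ B := by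
  by_contra! hlt
  set T : Set ℝ := {s | f s ≤ B} with hT
  have hTt : ∀ s ∈ T, s < t := by
    intro s hs
    by_contra! hts
    exact absurd (f.mono hts) (not_le.2 (lt_of_le_of_lt hs hlt))
  have hbdd : BddAbove T := ⟨t, fun s hs => (hTt s hs).le⟩
  have hne : T.Nonempty := ⟨u, hu⟩
  have habove : ∀ s, sSup T < s → B < f s := by
    intro s hs
    by_contra! hle
    exact absurd (le_csSup hbdd hle) (not_le.2 hs)
  by_cases hmem : sSup T ∈ T
  · have h0 : f.measure (Set.Ioc (sSup T) t) = 0 :=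
      measure_mono_null (t := {s | s ≤ t ∧ B < f s}) (fun s hs => ⟨hs.2, habove s hs.1⟩) h
    rw [StieltjesFunction.measure_Ioc, ENNReal.ofReal_eq_zero] at h0
    have : f (sSup T) ≤ B := hmem
    linarith
  · have h0 : f.measure (Set.Icc (sSup T) t) = 0 := by
      refine measure_mono_null (t := {s | s ≤ t ∧ B < f s}) (fun s hs => ⟨hs.2, ?_⟩) h
      rcases eq_or_lt_of_le hs.1 with h1 | h1
      · rw [← h1]; exact not_le.1 hmem
      · exact habove s h1
    rw [StieltjesFunction.measure_Icc, ENNReal.ofReal_eq_zero] at h0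
    have hl : Function.leftLim f (sSup T) ≤ B := by
      refine le_of_tendsto (f.mono.tendsto_leftLim (sSup T)) ?_
      filter_upwards [self_mem_nhdsWithin] with s hs
      obtain ⟨r, hr, hsr⟩ := exists_lt_of_lt_csSup hne hs
      exact (f.mono hsr.le).trans hr
    linarith

/-- The extension by zero to negative times of a nonnegative, nondecreasing, right-continuous
function on `[0, ∞)` is a Stieltjes function, so `lsMeasure` takes its meaningful branch on it. -/
lemma extZero_stieltjes (g : ℝ → ℝ) (h0 : ∀ t, 0 ≤ t → 0 ≤ g t)
    (hm : MonotoneOn g (Set.Ici 0))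
    (hr : ∀ t, 0 ≤ t → ContinuousWithinAt g (Set.Ici t) t) :
    Monotone (extZero g) ∧ ∀ x, ContinuousWithinAt (extZero g) (Set.Ici x) x := by
  constructor
  · intro s t hst
    unfold extZero
    split_ifs with h1 h2 h2
    · exact le_rfl
    · exact h0 t (not_lt.1 h2)
    · linarith
    · exact hm (not_lt.1 h1) (not_lt.1 h2) hst
  · intro x
    rcases lt_or_ge x 0 with hx | hx
    · have : extZero g =ᶠ[𝓝 x] fun _ => 0 := by
        filter_upwards [Iio_mem_nhds hx] with s hs
        exact if_pos hs
      exact (continuousAt_const.congr this.symm).continuousWithinAt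
    · refine (hr x hx).congr (fun s hs => ?_) ?_
      · exact if_neg (not_lt.2 (hx.trans hs))
      · exact if_neg (not_lt.2 hx)

lemma one_sub_transpose_mulVec {n : ℕ} (P : Matrix (Fin n) (Fin n) ℝ) (v : Fin n → ℝ)
    (i : Fin n) : (1 - P.transpose).mulVec v i = v i - ∑ j, v j * P j i := by
  rw [Matrix.sub_mulVec, Matrix.one_mulVec, Matrix.mulVec_transpose]
  rfl

/-- One step of the contraction: a constant bound `D` on `L - M` over `[0, t]` improves to
`Pᵗ D`. -/
lemma reflection_step {n : ℕ} (P : Matrix (Fin n) (Fin n) ℝ) (hP : ∀ i j, 0 ≤ P i j)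
    (X W L M : ℝ → Fin n → ℝ) (hL : IsSolutionPair (1 - P.transpose) X W L)
    (hM0 : ∀ i t, 0 ≤ t → 0 ≤ M t i)
    (hMm : ∀ i, MonotoneOn (fun t => M t i) (Set.Ici (0 : ℝ)))
    (hXM : ∀ i t, 0 ≤ t → 0 ≤ X t i + (1 - P.transpose).mulVec (M t) i)
    (t : ℝ) (D : Fin n → ℝ) (hD0 : 0 ≤ D)
    (hD : ∀ s, 0 ≤ s → s ≤ t → ∀ j, L s j - M s j ≤ D j)
    (s : ℝ) (hs : 0 ≤ s) (hst : s ≤ t) (i : Fin n) :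
    L s i - M s i ≤ Matrix.vecMul D P i := by
  have hE0 : 0 ≤ ∑ j, D j * P j i := Finset.sum_nonneg fun j _ => mul_nonneg (hD0 j) (hP j i)
  have hS := extZero_stieltjes (fun t => L t i) (hL.nonnegL i) (hL.monoL i) (hL.rcL i)
  have hflat := hL.flat i
  rw [lsMeasure, dif_pos hS] at hflat
  set B : ℝ := M s i + ∑ j, D j * P j i with hB
  have hB0 : 0 ≤ B := add_nonneg (hM0 i s hs) hE0
  have key := stieltjes_le_of_null ⟨_, hS.1, hS.2⟩ s B (-1)
    (by simpa [extZero] using hB0) (measure_mono_null ?_ hflat)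
  · have key' : extZero (fun t => L t i) s ≤ B := key
    rw [extZero, if_neg (not_lt.2 hs)] at key'
    change _ ≤ ∑ j, D j * P j i
    linarith
  · rintro r ⟨hrs, hr⟩
    change B < extZero (fun t => L t i) r at hr
    have hr0 : 0 ≤ r := by
      by_contra! hneg
      rw [extZero, if_pos hneg] at hr
      linarith
    rw [extZero, if_neg (not_lt.2 hr0)] at hr
    refine ⟨hr0, ?_⟩
    have hMr : M r i ≤ M s i := hMm i hr0 hs hrs
    have h1 := congrFun (hL.eqn r hr0) i
    have h2 := hXM i r hr0
    rw [Pi.add_apply, one_sub_transpose_mulVec] at h1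
    rw [one_sub_transpose_mulVec] at h2
    have h3 : ∑ j, L r j * P j i ≤ ∑ j, M r j * P j i + ∑ j, D j * P j i := by
      rw [← Finset.sum_add_distrib]
      refine Finset.sum_le_sum fun j _ => ?_
      have := mul_le_mul_of_nonneg_right (hD r hr0 (hrs.trans hst) j) (hP j i)
      linarith
    linarith

/-- Minimality of the regulator: in a solution pair, `L` lies below every nonnegative,
nondecreasing `M` that keeps `X + R M` nonnegative. -/
lemma reflection_le {n : ℕ} (P : Matrix (Fin n) (Fin n) ℝ) (hP : ∀ i j, 0 ≤ P i j)
    (hPpow : Tendsto (fun k : ℕ => P ^ k) atTop (𝓝 0))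
    (X W L M : ℝ → Fin n → ℝ) (hL : IsSolutionPair (1 - P.transpose) X W L)
    (hM0 : ∀ i t, 0 ≤ t → 0 ≤ M t i)
    (hMm : ∀ i, MonotoneOn (fun t => M t i) (Set.Ici (0 : ℝ)))
    (hXM : ∀ i t, 0 ≤ t → 0 ≤ X t i + (1 - P.transpose).mulVec (M t) i)
    (t : ℝ) (ht : 0 ≤ t) (i : Fin n) : L t i ≤ M t i := by
  have hk : ∀ k : ℕ, 0 ≤ Matrix.vecMul (L t) (P ^ k) ∧
      ∀ s, 0 ≤ s → s ≤ t → ∀ j, L s j - M s j ≤ Matrix.vecMul (L t) (P ^ k) j := by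
    intro k
    induction k with
    | zero =>
      rw [pow_zero, Matrix.vecMul_one]
      refine ⟨fun j => hL.nonnegL j t ht, fun s hs hst j => ?_⟩
      have h1 : L s j ≤ L t j := hL.monoL j hs ht hst
      have := hM0 j s hs
      linarith
    | succ k ih =>
      rw [pow_succ, ← Matrix.vecMul_vecMul]
      refine ⟨fun j => ?_, reflection_step P hP X W L M hL hM0 hMm hXM t _ ih.1 ih.2⟩
      change 0 ≤ ∑ l, Matrix.vecMul (L t) (P ^ k) l * P l j
      exact Finset.sum_nonneg fun l _ => mul_nonneg (ih.1 l) (hP l j)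
  have hlim : Tendsto (fun k : ℕ => Matrix.vecMul (L t) (P ^ k) i) atTop (𝓝 0) := by
    have hc : Continuous fun A : Matrix (Fin n) (Fin n) ℝ => Matrix.vecMul (L t) A i :=
      (continuous_apply i).comp (continuous_const.matrix_vecMul continuous_id)
    have h0 := (hc.tendsto 0).comp hPpow
    rwa [Matrix.vecMul_zero] at h0
  have := ge_of_tendsto' hlim fun k => (hk k).2 t ht le_rfl i
  linarith

/-- If W_i(a+X) - W_i(X) → 0 for every a ≥ 0, then L_i(a+X) diverges for every a ≥ 0.
Here (𝒲 c, 𝒧 c) is the unique solution pair of the Skorohod problem for c + X. -/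
theorem skorohod_insensitivity_implies_divergence
    {n : ℕ} (hn : 0 < n) (P : Matrix (Fin n) (Fin n) ℝ)
    (hPnonneg : ∀ i j, 0 ≤ P i j)
    (hPdiag : ∀ i, P i i = 0)
    (hPpow : Filter.Tendsto (fun k : ℕ => P ^ k) Filter.atTop (nhds 0))
    (X : ℝ → Fin n → ℝ) (hX : Cadlag X) (i : Fin n)
    (𝒲 𝒧 : (Fin n → ℝ) → ℝ → Fin n → ℝ)
    (hsol : ∀ c : Fin n → ℝ, 0 ≤ c →
      IsSolutionPair (1 - P.transpose) (fun t => c + X t) (𝒲 c) (𝒧 c))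
    (huniq : ∀ c : Fin n → ℝ, 0 ≤ c → ∀ W L : ℝ → Fin n → ℝ,
      IsSolutionPair (1 - P.transpose) (fun t => c + X t) W L →
      ∀ t : ℝ, 0 ≤ t → W t = 𝒲 c t ∧ L t = 𝒧 c t)
    (hconv : ∀ a : Fin n → ℝ, 0 ≤ a →
      Filter.Tendsto (fun t => 𝒲 a t i - 𝒲 0 t i) Filter.atTop (nhds 0)) :
    ∀ a : Fin n → ℝ, 0 ≤ a →
      Filter.Tendsto (fun t => 𝒧 a t i) Filter.atTop Filter.atTop := by
  intro a ha
  have hsa := hsol a ha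
  by_contra hnot
  -- A nondecreasing function that does not tend to `∞` is bounded.
  obtain ⟨B, hB⟩ : ∃ B : ℝ, ∀ t, 0 ≤ t → 𝒧 a t i ≤ B := by
    by_contra! hunb
    refine hnot (tendsto_atTop.2 fun B => ?_)
    obtain ⟨u, hu0, hu⟩ := hunb B
    filter_upwards [eventually_ge_atTop u] with t htu
    exact hu.le.trans (hsa.monoL i hu0 (hu0.trans htu) htu)
  have hB0 : 0 ≤ B := (hsa.nonnegL i 0 le_rfl).trans (hB 0 le_rfl)
  set c : Fin n → ℝ := a + Pi.single i (B + 1) with hc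
  have hac : a ≤ c := by
    rw [hc]
    exact le_add_of_nonneg_right (Pi.single_nonneg.2 (by linarith))
  have hsc := hsol c (ha.trans hac)
  have hle : ∀ t, 0 ≤ t → ∀ j, 𝒧 c t j ≤ 𝒧 a t j := by
    intro t ht j
    refine reflection_le P hPnonneg hPpow _ _ _ _ hsc hsa.nonnegL hsa.monoL ?_ t ht j
    intro l s hs
    have h1 := congrFun (hsa.eqn s hs) l
    have h2 := hsa.nonnegW l s hs
    have h3 := hac l
    simp only [Pi.add_apply] at h1 ⊢
    linarith
  have hgap : ∀ t, 0 ≤ t → 1 ≤ 𝒲 c t i - 𝒲 a t i := by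
    intro t ht
    have h1 := congrFun (hsc.eqn t ht) i
    have h2 := congrFun (hsa.eqn t ht) i
    simp only [Pi.add_apply, one_sub_transpose_mulVec] at h1 h2
    have hci : c i = a i + (B + 1) := by simp [hc]
    have h3 : ∑ j, 𝒧 c t j * P j i ≤ ∑ j, 𝒧 a t j * P j i :=
      Finset.sum_le_sum fun j _ => mul_le_mul_of_nonneg_right (hle t ht j) (hPnonneg j i)
    have h4 := hsc.nonnegL i t ht
    have h5 := hB t ht
    linarith
  have hlim : Tendsto (fun t => 𝒲 c t i - 𝒲 a t i) atTop (𝓝 0) := by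
    simpa using (hconv c (ha.trans hac)).sub (hconv a ha)
  have : (1 : ℝ) ≤ 0 := by
    refine ge_of_tendsto hlim ?_
    filter_upwards [eventually_ge_atTop 0] with t ht using hgap t ht
  linarith
end

section
/- Let X be a càdlàg function from [0,∞) to ℝⁿ and fix i ∈ {1,…,n}. Suppose that liminf_{t→∞} X_i(t) = −∞ or liminf_{t→∞} (R⁻¹X(t))_i = −∞. Then for every a ∈ [0,∞)ⁿ, every solution pair (Wᵃ, Lᵃ) of the Skorohod problem for a + X and every solution pair (W⁰, L⁰) of the Skorohod problem for X satisfy lim_{t→∞} (Wᵃ_i(t) − W⁰_i(t)) = 0. -/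
/-!
Write `D = L⁰ - Lᵃ`, extended by `0` to negative times, and `Δ = Wᵃ - W⁰ = a - R D`. The whole
argument rests on `D` being nondecreasing in every coordinate (`diff_mono`).

To see this, let `E_j(t)` be the largest decrease of `D_j` between two times `s ≤ r ≤ t`. A decrease
requires growth of `Lᵃ_j` on `(s, r]`, hence a time `r'` there, capturing almost all of that growth,
at which `Wᵃ_j = 0` (`exists_zero_between`), so that
`D_j(r') ≥ a_j + ∑ₖ Pₖⱼ Dₖ(r')`. Symmetrically, going back from `s` to a time `u ≤ s` at which
`W⁰_j = 0` (or to negative times) costs almost no growth of `L⁰_j` and yields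
`D_j(u) ≤ a_j + ∑ₖ Pₖⱼ Dₖ(u)`. Subtracting gives `E ≤ Pᵗ E`, so `E ≤ (Pᵗ)ᵏ E → 0`
(`nonpos_of_le_mulVec`).

The same backward step then gives `Δ ≥ 0` (`diff_le`), hence `D ≤ R⁻¹ a`; so `D`, and with it `Δ`,
converges. Either form of the hypothesis forces `Lᵃ_i` to be unbounded, because
`Wᵃ_i ≥ 0` and `(R⁻¹ Wᵃ)_i ≥ 0`. Hence `Wᵃ_i` vanishes at arbitrarily large times, where
`0 ≤ W⁰_i ≤ Wᵃ_i` gives `Δ_i = 0`, and the limit of `Δ_i` is `0`.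
-/

open MeasureTheory Filter Topology

/-! ### The inverse-positive matrix `I - Pᵗ` -/

section MatrixFacts

variable {n : ℕ} {P : Matrix (Fin n) (Fin n) ℝ}

/-- Comparison principle for `I - Pᵗ`: a subsolution of `v = Pᵗ v` is nonpositive, by iterating
`v ≤ (Pᵗ)ᵏ v`. -/
lemma nonpos_of_le_mulVec (hPnonneg : ∀ i j, 0 ≤ P i j)
    (hPpow : Tendsto (fun k : ℕ => P ^ k) atTop (nhds 0)) (v : Fin n → ℝ)
    (hv : ∀ j, v j ≤ ∑ k, P k j * v k) (j : Fin n) : v j ≤ 0 := by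
  have key : ∀ m : ℕ, ∀ j, v j ≤ ∑ k, (P ^ m) k j * v k := by
    intro m
    induction m with
    | zero => intro j; simp [Matrix.one_apply]
    | succ m ih =>
      intro j
      calc v j ≤ ∑ k, P k j * v k := hv j
        _ ≤ ∑ k, P k j * ∑ l, (P ^ m) l k * v l :=
          Finset.sum_le_sum fun k _ => mul_le_mul_of_nonneg_left (ih k) (hPnonneg k j)
        _ = ∑ l, (P ^ (m + 1)) l j * v l := by
          simp_rw [pow_succ, Matrix.mul_apply, Finset.sum_mul, Finset.mul_sum]
          rw [Finset.sum_comm]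
          refine Finset.sum_congr rfl fun l _ => Finset.sum_congr rfl fun k _ => by ring
  have hlim : Tendsto (fun m : ℕ => ∑ k, (P ^ m) k j * v k) atTop (nhds 0) := by
    have : Tendsto (fun m : ℕ => ∑ k, (P ^ m) k j * v k) atTop
        (nhds (∑ k, (0 : Matrix (Fin n) (Fin n) ℝ) k j * v k)) := by
      refine tendsto_finsetSum _ fun k _ => ?_
      exact (((continuous_apply_apply k j).tendsto
        (0 : Matrix (Fin n) (Fin n) ℝ)).comp hPpow).mul_const _
    simpa using this
  exact ge_of_tendsto' hlim fun m => key m j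

lemma reflection_mulVec (v : Fin n → ℝ) (j : Fin n) :
    (1 - P.transpose).mulVec v j = v j - ∑ k, P k j * v k := by
  rw [Matrix.sub_mulVec, Matrix.one_mulVec]
  rfl

lemma isUnit_reflection (hPnonneg : ∀ i j, 0 ≤ P i j)
    (hPpow : Tendsto (fun k : ℕ => P ^ k) atTop (nhds 0)) :
    IsUnit (1 - P.transpose) := by
  rw [← Matrix.mulVec_injective_iff_isUnit]
  have sub : ∀ v w : Fin n → ℝ, (1 - P.transpose).mulVec v = (1 - P.transpose).mulVec w →
      ∀ j, v j ≤ w j := by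
    intro v w h j
    have := nonpos_of_le_mulVec hPnonneg hPpow (v - w) (fun j => by
      have h0 : (1 - P.transpose).mulVec (v - w) j = 0 := by
        rw [Matrix.mulVec_sub, h, sub_self]; rfl
      rw [reflection_mulVec] at h0
      linarith) j
    simpa using this
  intro v w h
  exact funext fun j => le_antisymm (sub v w h j) (sub w v h.symm j)

lemma reflection_inv_mulVec (hPnonneg : ∀ i j, 0 ≤ P i j)
    (hPpow : Tendsto (fun k : ℕ => P ^ k) atTop (nhds 0)) (v : Fin n → ℝ) :
    (1 - P.transpose)⁻¹.mulVec ((1 - P.transpose).mulVec v) = v := by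
  have hu := (Matrix.isUnit_iff_isUnit_det _).1 (isUnit_reflection hPnonneg hPpow)
  rw [Matrix.mulVec_mulVec, Matrix.nonsing_inv_mul _ hu, Matrix.one_mulVec]

lemma reflection_mulVec_inv (hPnonneg : ∀ i j, 0 ≤ P i j)
    (hPpow : Tendsto (fun k : ℕ => P ^ k) atTop (nhds 0)) (v : Fin n → ℝ) :
    (1 - P.transpose).mulVec ((1 - P.transpose)⁻¹.mulVec v) = v := by
  have hu := (Matrix.isUnit_iff_isUnit_det _).1 (isUnit_reflection hPnonneg hPpow)
  rw [Matrix.mulVec_mulVec, Matrix.mul_nonsing_inv _ hu, Matrix.one_mulVec]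

/-- `(I - Pᵗ)⁻¹ ≥ 0`, in the form of the maximum principle for `I - Pᵗ`. -/
lemma le_reflection_inv (hPnonneg : ∀ i j, 0 ≤ P i j)
    (hPpow : Tendsto (fun k : ℕ => P ^ k) atTop (nhds 0)) (v w : Fin n → ℝ)
    (h : ∀ j, v j - ∑ k, P k j * v k ≤ w j) (j : Fin n) :
    v j ≤ (1 - P.transpose)⁻¹.mulVec w j := by
  set z := (1 - P.transpose)⁻¹.mulVec w with hz
  have hzw : ∀ j, z j - ∑ k, P k j * z k = w j := fun j => by
    rw [← reflection_mulVec, hz, reflection_mulVec_inv hPnonneg hPpow]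
  have := nonpos_of_le_mulVec hPnonneg hPpow (fun j => v j - z j) (fun j => by
    simp only [mul_sub, Finset.sum_sub_distrib]
    linarith [h j, hzw j]) j
  linarith

end MatrixFacts

/-! ### Zeros of `W` where the regulator grows -/

section Regulator

variable {n : ℕ} {R : Matrix (Fin n) (Fin n) ℝ} {X W L : ℝ → Fin n → ℝ}

/-- The `j`-th coordinate of the regulator `L`, extended by `0` to negative times. -/
noncomputable def extReg (L : ℝ → Fin n → ℝ) (j : Fin n) : ℝ → ℝ := extZero fun t => L t j

lemma extReg_of_neg {j : Fin n} {t : ℝ} (ht : t < 0) : extReg L j t = 0 := by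
  simp [extReg, extZero, ht]

lemma extReg_of_nonneg {j : Fin n} {t : ℝ} (ht : 0 ≤ t) : extReg L j t = L t j := by
  simp [extReg, extZero, not_lt.2 ht]

lemma extReg_nonneg (h : IsSolutionPair R X W L) (j : Fin n) (t : ℝ) : 0 ≤ extReg L j t := by
  rcases lt_or_ge t 0 with ht | ht
  · rw [extReg_of_neg ht]
  · rw [extReg_of_nonneg ht]; exact h.nonnegL j t ht

lemma extReg_mono (h : IsSolutionPair R X W L) (j : Fin n) : Monotone (extReg L j) := by
  intro s t hst
  rcases lt_or_ge s 0 with hs | hs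
  · rw [extReg_of_neg hs]; exact extReg_nonneg h j t
  · rw [extReg_of_nonneg hs, extReg_of_nonneg (hs.trans hst)]
    exact h.monoL j hs (hs.trans hst) hst

lemma extReg_rc (h : IsSolutionPair R X W L) (j : Fin n) (t : ℝ) :
    ContinuousWithinAt (extReg L j) (Set.Ici t) t := by
  rcases lt_or_ge t 0 with ht | ht
  · have : extReg L j =ᶠ[𝓝 t] fun _ => 0 := by
      filter_upwards [Iio_mem_nhds ht] with s hs using extReg_of_neg hs
    exact (continuousAt_const.congr this.symm).continuousWithinAt
  · exact (h.rcL j t ht).congr (fun s hs => extReg_of_nonneg (ht.trans hs)) (extReg_of_nonneg ht)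

/-- If `L_j` increases over `(s, t]`, then `W_j` vanishes at some time of that interval at which
`L_j` is within `ε` of `L_j(t)`. The times close to the final level form an interval `[r₀, t]` of
mass at least `min ε (half the increase)`, and this mass cannot sit where `W_j > 0`. -/
lemma exists_zero_between (h : IsSolutionPair R X W L) (j : Fin n) {s t ε : ℝ} (hε : 0 < ε)
    (hst : extReg L j s < extReg L j t) :
    ∃ r, s < r ∧ r ≤ t ∧ 0 ≤ r ∧ W r j = 0 ∧ extReg L j t ≤ extReg L j r + ε := by
  set f := extReg L j with hf
  have hmono : Monotone f := extReg_mono h j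
  obtain ⟨c, hc1, hc2, hc3⟩ : ∃ c, f s < c ∧ c < f t ∧ f t ≤ c + ε := by
    refine ⟨max ((f s + f t) / 2) (f t - ε), ?_, ?_, ?_⟩
    · exact lt_max_of_lt_left (by linarith)
    · exact max_lt (by linarith) (by linarith)
    · linarith [le_max_right ((f s + f t) / 2) (f t - ε)]
  set S : Set ℝ := {r | c ≤ f r} with hS
  have hSbdd : BddBelow S := ⟨s, fun r hr => by
    by_contra hlt
    have := hmono (not_le.1 hlt).le
    have hr' : c ≤ f r := hr
    linarith⟩
  have htS : t ∈ S := hc2.le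
  set r₀ := sInf S with hr₀
  have hr₀t : r₀ ≤ t := csInf_le hSbdd htS
  have habove : ∀ r, r₀ < r → c ≤ f r := fun r hr => by
    obtain ⟨q, hq, hqr⟩ := exists_lt_of_csInf_lt ⟨t, htS⟩ hr
    exact le_trans hq (hmono hqr.le)
  have hr₀S : c ≤ f r₀ := by
    have hten : Tendsto f (𝓝[>] r₀) (𝓝 (f r₀)) :=
      (extReg_rc h j r₀).mono_left (nhdsWithin_mono _ Set.Ioi_subset_Ici_self)
    exact ge_of_tendsto hten (by filter_upwards [self_mem_nhdsWithin] with r hr using habove r hr)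
  have hbelow : ∀ r, r < r₀ → f r ≤ c := fun r hr => by
    by_contra hlt
    exact absurd (csInf_le hSbdd (show r ∈ S from (not_le.1 hlt).le)) (not_le.2 hr)
  by_contra hno
  push Not at hno
  have hsub : Set.Icc r₀ t ⊆ {t : ℝ | 0 ≤ t ∧ 0 < W t j} := by
    intro r hr
    have hcr : c ≤ f r := hr₀S.trans (hmono hr.1)
    have hr0 : 0 ≤ r := by
      by_contra hneg
      have h1 : f r = 0 := extReg_of_neg (not_le.1 hneg)
      have h2 : 0 ≤ f s := extReg_nonneg h j s
      linarith
    refine ⟨hr0, lt_of_le_of_ne (h.nonnegW j r hr0) fun hW => ?_⟩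
    have hsr : s < r := by
      by_contra hle
      have := hmono (not_lt.1 hle)
      linarith
    have := hno r hsr hr.2 hr0 hW.symm
    linarith
  have hnull : lsMeasure f (Set.Icc r₀ t) = 0 := measure_mono_null hsub (h.flat j)
  rw [lsMeasure, dif_pos ⟨hmono, extReg_rc h j⟩, StieltjesFunction.measure_Icc,
    ENNReal.ofReal_eq_zero] at hnull
  have hleft : Function.leftLim f r₀ ≤ c :=
    le_of_tendsto (hmono.tendsto_leftLim r₀)
      (by filter_upwards [self_mem_nhdsWithin] with r hr using hbelow r hr)
  have hnull' : f t - Function.leftLim f r₀ ≤ 0 := hnull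
  linarith

/-- Going backwards from any time, one reaches negative times or a zero of `W_j` at a cost of at
most `ε` in `L_j`. -/
lemma exists_zero_before (h : IsSolutionPair R X W L) (j : Fin n) (t : ℝ) {ε : ℝ} (hε : 0 < ε) :
    ∃ u ≤ t, extReg L j t ≤ extReg L j u + ε ∧ (u < 0 ∨ 0 ≤ u ∧ W u j = 0) := by
  have hlt : min t (-1) < 0 := (min_le_right _ _).trans_lt (by norm_num)
  rcases (extReg_mono h j (min_le_left t (-1))).eq_or_lt with heq | hlt'
  · exact ⟨_, min_le_left t (-1), by linarith, Or.inl hlt⟩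
  · obtain ⟨r, -, hrt, hr0, hW, hle⟩ := exists_zero_between h j hε hlt'
    exact ⟨r, hrt, hle, Or.inr ⟨hr0, hW⟩⟩

end Regulator

/-! ### Monotonicity and convergence of `L⁰ - Lᵃ` -/

section Comparison

variable {n : ℕ} {P : Matrix (Fin n) (Fin n) ℝ} {X Wa La W0 L0 : ℝ → Fin n → ℝ} {a : Fin n → ℝ}

/-- The difference `D = L⁰ - Lᵃ` of two regulators, extended by `0` to negative times. -/
noncomputable def regDiff (L0 La : ℝ → Fin n → ℝ) (t : ℝ) (j : Fin n) : ℝ :=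
  extReg L0 j t - extReg La j t

lemma diff_eqn (ha : IsSolutionPair (1 - P.transpose) (fun t => a + X t) Wa La)
    (h0 : IsSolutionPair (1 - P.transpose) X W0 L0) {t : ℝ} (ht : 0 ≤ t) (j : Fin n) :
    Wa t j - W0 t j = a j - (regDiff L0 La t j - ∑ k, P k j * regDiff L0 La t k) := by
  rw [ha.eqn t ht, h0.eqn t ht]
  simp only [Pi.add_apply, reflection_mulVec, regDiff, extReg_of_nonneg ht, mul_sub,
    Finset.sum_sub_distrib]
  ring

/-- The backward step: `D_j(s)` is at most `ε` above its value at an earlier time `u` at which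
`D_j ≤ a_j + (Pᵗ D)_j`, which for `u ≥ 0` means `Δ_j(u) ≥ 0`. -/
lemma exists_before (ha0 : 0 ≤ a)
    (ha : IsSolutionPair (1 - P.transpose) (fun t => a + X t) Wa La)
    (h0 : IsSolutionPair (1 - P.transpose) X W0 L0) (j : Fin n) (s : ℝ) {ε : ℝ} (hε : 0 < ε) :
    ∃ u ≤ s, regDiff L0 La s j ≤ regDiff L0 La u j + ε ∧
      regDiff L0 La u j ≤ a j + ∑ k, P k j * regDiff L0 La u k := by
  obtain ⟨u, hus, hle, hu⟩ := exists_zero_before h0 j s hε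
  refine ⟨u, hus, ?_, ?_⟩
  · have := extReg_mono ha j hus
    simp only [regDiff]; linarith
  · rcases hu with hu | ⟨hu, hW⟩
    · simpa [regDiff, extReg_of_neg hu] using ha0 j
    · have h1 := diff_eqn ha h0 hu j
      have h2 := ha.nonnegW j u hu
      linarith

lemma diff_mono (hPnonneg : ∀ i j, 0 ≤ P i j)
    (hPpow : Tendsto (fun k : ℕ => P ^ k) atTop (nhds 0)) (ha0 : 0 ≤ a)
    (ha : IsSolutionPair (1 - P.transpose) (fun t => a + X t) Wa La)
    (h0 : IsSolutionPair (1 - P.transpose) X W0 L0) (j : Fin n) :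
    Monotone (fun t => regDiff L0 La t j) := by
  intro s t hst
  set D := regDiff L0 La with hD
  -- `S k` collects the decreases of `D k` up to time `t`; its supremum plays the role of `E_k(t)`.
  set S : Fin n → Set ℝ := fun k => {x | ∃ p q, p ≤ q ∧ q ≤ t ∧ x = D p k - D q k} with hS
  have hbdd : ∀ k, BddAbove (S k) := by
    intro k
    refine ⟨extReg La k t, ?_⟩
    rintro x ⟨p, q, hpq, hqt, rfl⟩
    have h1 := extReg_mono h0 k hpq
    have h2 := extReg_mono ha k hqt
    have h3 := extReg_nonneg ha k p
    simp only [hD, regDiff]; linarith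
  have hne : ∀ k, (S k).Nonempty := fun k => ⟨_, t, t, le_rfl, le_rfl, rfl⟩
  have hmem : ∀ k p q, p ≤ q → q ≤ t → D p k - D q k ≤ sSup (S k) :=
    fun k p q hpq hqt => le_csSup (hbdd k) ⟨p, q, hpq, hqt, rfl⟩
  have hE0 : ∀ k, 0 ≤ sSup (S k) := fun k => by simpa using hmem k t t le_rfl le_rfl
  have hE : ∀ j, sSup (S j) ≤ ∑ k, P k j * sSup (S k) := by
    intro j
    refine le_of_forall_pos_le_add fun δ hδ => csSup_le (hne j) ?_
    rintro x ⟨p, q, hpq, hqt, rfl⟩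
    rcases (extReg_mono ha j hpq).eq_or_lt with heq | hlt
    · have h1 := extReg_mono h0 j hpq
      have h2 : 0 ≤ ∑ k, P k j * sSup (S k) :=
        Finset.sum_nonneg fun k _ => mul_nonneg (hPnonneg k j) (hE0 k)
      simp only [hD, regDiff]; linarith
    · obtain ⟨r, hpr, hrq, hr0, hWr, hler⟩ := exists_zero_between ha j (half_pos hδ) hlt
      obtain ⟨u, hup, hu1, hu2⟩ := exists_before ha0 ha h0 j p (half_pos hδ)
      have h1 : D r j ≤ D q j + δ / 2 := by
        have := extReg_mono h0 j hrq
        simp only [hD, regDiff]; linarith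
      have h2 : a j + ∑ k, P k j * D r k ≤ D r j := by
        have e := diff_eqn ha h0 hr0 j
        have := h0.nonnegW j r hr0
        linarith
      have h3 : ∑ k, P k j * D u k - ∑ k, P k j * D r k ≤ ∑ k, P k j * sSup (S k) := by
        rw [← Finset.sum_sub_distrib]
        refine Finset.sum_le_sum fun k _ => ?_
        rw [← mul_sub]
        exact mul_le_mul_of_nonneg_left (hmem k u r (hup.trans hpr.le) (hrq.trans hqt))
          (hPnonneg k j)
      linarith
  have := nonpos_of_le_mulVec hPnonneg hPpow (fun k => sSup (S k)) hE j
  have h2 := hmem j s t hst le_rfl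
  show D s j ≤ D t j
  linarith

/-- At times `t ≥ 0` this says `Δ ≥ 0`, i.e. `Wᵃ ≥ W⁰`. -/
lemma diff_le (hPnonneg : ∀ i j, 0 ≤ P i j)
    (hPpow : Tendsto (fun k : ℕ => P ^ k) atTop (nhds 0)) (ha0 : 0 ≤ a)
    (ha : IsSolutionPair (1 - P.transpose) (fun t => a + X t) Wa La)
    (h0 : IsSolutionPair (1 - P.transpose) X W0 L0) (j : Fin n) (t : ℝ) :
    regDiff L0 La t j ≤ a j + ∑ k, P k j * regDiff L0 La t k := by
  refine le_of_forall_pos_le_add fun ε hε => ?_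
  obtain ⟨u, hut, h1, h2⟩ := exists_before ha0 ha h0 j t hε
  have h3 : ∑ k, P k j * regDiff L0 La u k ≤ ∑ k, P k j * regDiff L0 La t k :=
    Finset.sum_le_sum fun k _ => mul_le_mul_of_nonneg_left
      (diff_mono hPnonneg hPpow ha0 ha h0 k hut) (hPnonneg k j)
  linarith

lemma diff_tendsto (hPnonneg : ∀ i j, 0 ≤ P i j)
    (hPpow : Tendsto (fun k : ℕ => P ^ k) atTop (nhds 0)) (ha0 : 0 ≤ a)
    (ha : IsSolutionPair (1 - P.transpose) (fun t => a + X t) Wa La)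
    (h0 : IsSolutionPair (1 - P.transpose) X W0 L0) (j : Fin n) :
    ∃ l, Tendsto (fun t => regDiff L0 La t j) atTop (𝓝 l) := by
  refine ⟨_, tendsto_atTop_ciSup (diff_mono hPnonneg hPpow ha0 ha h0 j)
    ⟨(1 - P.transpose)⁻¹.mulVec a j, ?_⟩⟩
  rintro x ⟨t, rfl⟩
  refine le_reflection_inv hPnonneg hPpow (regDiff L0 La t) a (fun k => ?_) j
  linarith [diff_le hPnonneg hPpow ha0 ha h0 k t]

/-- Once `L_i` dominates `-f` up to a constant and `liminf f = -∞`, `L_i` is unbounded and `W_i`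
has arbitrarily large zeros. -/
lemma frequently_zero {R : Matrix (Fin n) (Fin n) ℝ} {Y W L : ℝ → Fin n → ℝ} {i : Fin n}
    (h : IsSolutionPair R Y W L) (f : ℝ → ℝ) (C : ℝ)
    (hf : ∀ t, 0 ≤ t → -f t - C ≤ L t i)
    (hlim : liminf (fun t => (f t : EReal)) atTop = ⊥) :
    ∃ᶠ t in atTop, 0 ≤ t ∧ W t i = 0 := by
  rw [frequently_atTop]
  intro s
  have hfr : ∃ᶠ t in atTop, (f t : EReal) < ((-(extReg L i s) - C : ℝ) : EReal) :=
    frequently_lt_of_liminf_lt (by isBoundedDefault) (by rw [hlim]; exact EReal.bot_lt_coe _)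
  obtain ⟨t, hlt, ht⟩ := (hfr.and_eventually (eventually_ge_atTop 0)).exists
  rw [EReal.coe_lt_coe_iff] at hlt
  have h1 : extReg L i s < extReg L i t := by
    rw [extReg_of_nonneg (t := t) ht]
    linarith [hf t ht]
  obtain ⟨r, hsr, -, hr0, hW, -⟩ := exists_zero_between h i one_pos h1
  exact ⟨r, hsr.le, hr0, hW⟩

end Comparison

/-- Sufficient condition: if liminf X_i = -∞ or liminf (R⁻¹X)_i = -∞, then
W_i(a+X) - W_i(X) → 0 for every a ≥ 0. -/
theorem skorohod_sufficient_condition_insensitivity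
    {n : ℕ} (hn : 0 < n) (P : Matrix (Fin n) (Fin n) ℝ)
    (hPnonneg : ∀ i j, 0 ≤ P i j)
    (hPpow : Filter.Tendsto (fun k : ℕ => P ^ k) Filter.atTop (nhds 0))
    (X : ℝ → Fin n → ℝ) (hX : Cadlag X) (i : Fin n)
    (hliminf : Filter.liminf (fun t => (X t i : EReal)) Filter.atTop = ⊥ ∨
      Filter.liminf (fun t => ((1 - P.transpose)⁻¹.mulVec (X t) i : EReal)) Filter.atTop = ⊥) :
    ∀ (a : Fin n → ℝ) (Wa La W0 L0 : ℝ → Fin n → ℝ), 0 ≤ a →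
      IsSolutionPair (1 - P.transpose) (fun t => a + X t) Wa La →
      IsSolutionPair (1 - P.transpose) X W0 L0 →
      Filter.Tendsto (fun t => Wa t i - W0 t i) Filter.atTop (nhds 0) := by
  intro a Wa La W0 L0 ha0 ha h0
  have hfreq : ∃ᶠ t in atTop, 0 ≤ t ∧ Wa t i = 0 := by
    rcases hliminf with hl | hl
    · refine frequently_zero ha (fun t => X t i) (a i) (fun t ht => ?_) hl
      have h1 := ha.nonnegW i t ht
      rw [ha.eqn t ht] at h1
      simp only [Pi.add_apply, reflection_mulVec] at h1
      have h2 : 0 ≤ ∑ k, P k i * La t k :=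
        Finset.sum_nonneg fun k _ => mul_nonneg (hPnonneg k i) (ha.nonnegL k t ht)
      linarith
    · refine frequently_zero ha (fun t => (1 - P.transpose)⁻¹.mulVec (X t) i)
        ((1 - P.transpose)⁻¹.mulVec a i) (fun t ht => ?_) hl
      have h1 : 0 ≤ (1 - P.transpose)⁻¹.mulVec (Wa t) i := by
        simpa using le_reflection_inv hPnonneg hPpow 0 (Wa t)
          (fun j => by simpa using ha.nonnegW j t ht) i
      rw [ha.eqn t ht, Matrix.mulVec_add, Matrix.mulVec_add,
        reflection_inv_mulVec hPnonneg hPpow] at h1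
      simp only [Pi.add_apply] at h1
      linarith
  choose l hl using diff_tendsto hPnonneg hPpow ha0 ha h0
  have hlim : Tendsto (fun t => Wa t i - W0 t i) atTop
      (𝓝 (a i - (l i - ∑ k, P k i * l k))) := by
    have : Tendsto (fun t => a i - (regDiff L0 La t i - ∑ k, P k i * regDiff L0 La t k)) atTop
        (𝓝 (a i - (l i - ∑ k, P k i * l k))) :=
      ((hl i).sub (tendsto_finsetSum _ fun k _ => (hl k).const_mul _)).const_sub _
    refine this.congr' ?_
    filter_upwards [eventually_ge_atTop 0] with t ht using (diff_eqn ha h0 ht i).symm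
  suffices hz : a i - (l i - ∑ k, P k i * l k) = 0 by rwa [hz] at hlim
  by_contra hne
  obtain ⟨t, ⟨ht, hW⟩, hne'⟩ := (hfreq.and_eventually (hlim.eventually_ne hne)).exists
  refine hne' ?_
  have h1 := diff_eqn ha h0 ht i
  have h2 := diff_le hPnonneg hPpow ha0 ha h0 i t
  have h3 := h0.nonnegW i t ht
  linarith
end
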